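/- Let A ⊆ B be an inclusion of C*-algebras such that every nonzero positive element of A is full and properly infinite in B. Then the inclusion A ⊆ B has real rank zero. Moreover, for every nonzero positive a ∈ A, the hereditary C*-subalgebra cl(aBa) has an increasing approximate unit consisting of projections which are full and properly infinite in B: there is a sequence of projections (p_n) in cl(aBa) with p_n ≤ p_{n+1} (equivalently p_n·p_{n+1} = p_n) for all n, each p_n full and properly infinite in B, such that ‖p_n·x − x‖ → 0 for every x ∈ cl(aBa). -/

import Mathlib

open Filter Topology

section Defs

variable {B : Type*} [NonUnitalNormedRing B] [StarRing B] [PartialOrder B]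

/-- A projection in a C*-algebra: a self-adjoint idempotent. -/
def IsProjection (p : B) : Prop := star p = p ∧ p * p = p

/-- The hereditary subalgebra `cl(a·S·a)`: the norm closure of `{a * b * a : b ∈ S}`. -/
def herSub (S : Set B) (a : B) : Set B := closure {x : B | ∃ b ∈ S, x = a * b * a}

/-- `T` has an approximate unit of projections. -/
def HasApproxUnitOfProjections (T : Set B) : Prop :=
  ∀ x ∈ T, 0 ≤ x → ∀ ε : ℝ, 0 < ε → ∃ p ∈ T, IsProjection p ∧ ‖p * x - x‖ < ε

/-- The inclusion `A ⊆ S` of C*-algebras has real rank zero. -/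
def InclusionRealRankZero (A S : Set B) : Prop :=
  ∀ a ∈ A, 0 ≤ a → a ≠ 0 → HasApproxUnitOfProjections (herSub S a)

end Defs

section Infinite

variable {B : Type*} [NonUnitalCStarAlgebra B] [PartialOrder B] [StarOrderedRing B]

/-- An element `b` of a C*-algebra `B` is full if the closed two-sided ideal of `B`
generated by `b` is all of `B`. -/
def IsFullIn (b : B) : Prop :=
  ∀ J : TwoSidedIdeal B, IsClosed (J : Set B) → b ∈ J → ∀ x : B, x ∈ J

/-- Cuntz subequivalence: `a ≾ b` if `a = lim xₙ * b * xₙ*`. -/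
def CuntzSubequiv {R : Type*} [NonUnitalRing R] [StarRing R] [TopologicalSpace R]
    (a b : R) : Prop :=
  ∃ x : ℕ → R, Tendsto (fun n => x n * b * star (x n)) atTop (nhds a)

/-- A nonzero positive element `b` of a C*-algebra is properly infinite if
`diag(b, b) ≾ diag(b, 0)` in `M₂(B)`. -/
def ProperlyInfinite (b : B) : Prop :=
  b ≠ 0 ∧ 0 ≤ b ∧
    CuntzSubequiv (R := Matrix (Fin 2) (Fin 2) B)
      (Matrix.diagonal ![b, b]) (Matrix.diagonal ![b, 0])

end Infinite

/-!
Every positive element of `B` is Cuntz subequivalent to a full, properly infinite `b`. Given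
`0 ≤ a ∈ A` and `δ > 0` such that `a` has spectrum in `(0, δ)`, let `b ∈ A` be a bump function of
`a` supported there and let `t ∈ A` be a cutoff of `a` with `t * b = b`. Since `2 * t - t ^ 2 ≾ b`,
there is `z ∈ b * B` with `star z * z ≈ 2 * t - t ^ 2`, and because `(1 - t) * z = 0` the element
`v = 1 - t + z` of the unitization satisfies `star v * v ≈ 1`. Its range projection is
`v * (star v * v)⁻¹ * star v`, and the complement of that is a projection in `B` which acts as a
unit on the part of `a` above `δ` and is itself fixed by a cutoff of `a` near `0`. If `(0, δ)`
contains no spectrum, a cutoff of `a` is already a projection. Iterating with `δ → 0` gives the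
increasing approximate unit.
-/

section Cutoff

/-- The piecewise linear function that vanishes below `δ` and equals `1` above `2 * δ`. -/
noncomputable def ramp (δ x : ℝ) : ℝ := max 0 (min 1 (x / δ - 1))

variable {δ x : ℝ}

@[fun_prop]
lemma continuous_ramp (δ : ℝ) : Continuous (ramp δ) := by
  unfold ramp
  fun_prop

lemma ramp_nonneg : 0 ≤ ramp δ x := le_max_left _ _

lemma ramp_le_one : ramp δ x ≤ 1 := max_le zero_le_one (min_le_left _ _)

@[simp]
lemma ramp_zero_right (δ : ℝ) : ramp δ 0 = 0 := by simp [ramp]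

lemma ramp_of_le (hδ : 0 < δ) (hx : x ≤ δ) : ramp δ x = 0 :=
  max_eq_left ((min_le_right _ _).trans (sub_nonpos.2 ((div_le_one hδ).2 hx)))

lemma ramp_of_two_mul_le (hδ : 0 < δ) (hx : 2 * δ ≤ x) : ramp δ x = 1 := by
  have h : 1 ≤ x / δ - 1 := by linarith [(le_div_iff₀ hδ).2 hx]
  simp [ramp, min_eq_left h]

lemma ramp_pos (hδ : 0 < δ) (hx : δ < x) : 0 < ramp δ x :=
  lt_max_of_lt_right (lt_min one_pos (sub_pos.2 ((one_lt_div hδ).2 hx)))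

lemma norm_ramp_mul_sub_le (hδ : 0 < δ) (hx : 0 ≤ x) : ‖ramp δ x * x - x‖ ≤ 2 * δ := by
  rcases le_total (2 * δ) x with h | h
  · simpa [ramp_of_two_mul_le hδ h] using hδ.le
  · have h0 : 0 ≤ ramp δ x * x := mul_nonneg ramp_nonneg hx
    have h1 : ramp δ x * x ≤ x := mul_le_of_le_one_left hx ramp_le_one
    rw [Real.norm_eq_abs, abs_le]
    constructor <;> linarith

variable {B : Type*} [NonUnitalCStarAlgebra B] {a : B}

lemma cfcₙ_mul_cfcₙ_eq_of_eqOn {f g k : ℝ → ℝ} (hf : Continuous f) (hf0 : f 0 = 0)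
    (hg : Continuous g) (hg0 : g 0 = 0) (h : (quasispectrum ℝ a).EqOn (f * g) k) :
    cfcₙ f a * cfcₙ g a = cfcₙ k a := by
  rw [← cfcₙ_mul f g a hf.continuousOn hf0 hg.continuousOn hg0]
  exact cfcₙ_congr h

lemma cfcₙ_ne_zero (ha : IsSelfAdjoint a) {f : ℝ → ℝ} (hf : Continuous f) (hf0 : f 0 = 0)
    (hx : x ∈ quasispectrum ℝ a) (hfx : f x ≠ 0) : cfcₙ f a ≠ 0 := by
  intro h
  rw [← cfcₙ_zero ℝ a] at h
  exact hfx (eqOn_of_cfcₙ_eq_cfcₙ h ha hf.continuousOn hf0 continuousOn_const rfl hx)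

/-- The spectral cutoff of `a` at `δ`, a continuous substitute for the spectral projection of `a`
for `[δ, ∞)`. -/
noncomputable def cutoff (a : B) (δ : ℝ) : B := cfcₙ (ramp δ) a

lemma isSelfAdjoint_cutoff : IsSelfAdjoint (cutoff a δ) := cfcₙ_predicate _ a

lemma cutoff_mem {A : NonUnitalStarSubalgebra ℂ B} (hA : IsClosed (A : Set B)) (ha : a ∈ A) :
    cutoff a δ ∈ A :=
  cfcₙ_mem (hs := hA) _ ha

lemma cfcₙ_mul_cutoff (hδ : 0 < δ) {g : ℝ → ℝ} (hg : Continuous g) (hg0 : g 0 = 0)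
    (h : ∀ x ∈ quasispectrum ℝ a, x < 2 * δ → g x = 0) : cfcₙ g a * cutoff a δ = cfcₙ g a := by
  refine cfcₙ_mul_cfcₙ_eq_of_eqOn hg hg0 (continuous_ramp δ) (ramp_zero_right δ) fun x hx ↦ ?_
  rcases lt_or_ge x (2 * δ) with hxδ | hxδ
  · simp [h x hx hxδ]
  · simp [ramp_of_two_mul_le hδ hxδ]

lemma cutoff_mul_cutoff {δ' : ℝ} (hδ' : 0 < δ') (h : 2 * δ' ≤ δ) :
    cutoff a δ * cutoff a δ' = cutoff a δ :=
  cfcₙ_mul_cutoff hδ' (continuous_ramp δ) (ramp_zero_right δ) fun _ _ hx ↦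
    ramp_of_le (by linarith) (by linarith)

lemma isStarProjection_cutoff (hδ : 0 < δ) (hgap : ∀ x ∈ quasispectrum ℝ a, x < 2 * δ → x ≤ δ) :
    IsStarProjection (cutoff a δ) :=
  ⟨cfcₙ_mul_cutoff hδ (continuous_ramp δ) (ramp_zero_right δ) fun x hx hxδ ↦
    ramp_of_le hδ (hgap x hx hxδ), isSelfAdjoint_cutoff⟩

variable [PartialOrder B] [StarOrderedRing B]

lemma cutoff_nonneg : 0 ≤ cutoff a δ := cfcₙ_nonneg fun _ _ ↦ ramp_nonneg

lemma cutoff_ne_zero (ha : 0 ≤ a) (hδ : 0 < δ) (hδa : δ < ‖a‖) : cutoff a δ ≠ 0 := by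
  have hmem : ‖a‖ ∈ quasispectrum ℝ a := by
    obtain ⟨x, hx, hxa : ‖x‖ = ‖a‖⟩ :=
      (NonUnitalIsometricContinuousFunctionalCalculus.isGreatest_norm_quasispectrum (𝕜 := ℝ) a).1
    rwa [← hxa, Real.norm_of_nonneg (quasispectrum_nonneg_of_nonneg a ha x hx)]
  exact cfcₙ_ne_zero (.of_nonneg ha) (continuous_ramp δ) (ramp_zero_right δ) hmem
    (ramp_pos hδ hδa).ne'

lemma cutoff_mul_self_le : cutoff a δ * cutoff a δ ≤ cutoff a δ := by
  rw [cutoff, cfcₙ_mul_cfcₙ_eq_of_eqOn (continuous_ramp δ) (ramp_zero_right δ) (continuous_ramp δ)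
    (ramp_zero_right δ) (fun _ _ ↦ rfl)]
  exact cfcₙ_mono fun x _ ↦ mul_le_of_le_one_left ramp_nonneg ramp_le_one

lemma exists_cutoff_eq_mul (ha : IsSelfAdjoint a) (hδ : 0 < δ) :
    ∃ k : B, 0 ≤ k ∧ Commute a k ∧ cutoff a δ = a * k := by
  set f : ℝ → ℝ := fun x ↦ ramp δ x / max δ x
  have hδx (x : ℝ) : 0 < max δ x := lt_max_of_lt_left hδ
  have hf : Continuous f := (continuous_ramp δ).div (by fun_prop) fun x ↦ (hδx x).ne'
  refine ⟨cfcₙ f a, cfcₙ_nonneg fun x _ ↦ div_nonneg ramp_nonneg (hδx x).le, ?_, ?_⟩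
  · simpa [cfcₙ_id' ℝ a] using cfcₙ_commute_cfcₙ (fun x : ℝ ↦ x) f a
  · nth_rewrite 2 [← cfcₙ_id' ℝ a]
    refine (cfcₙ_mul_cfcₙ_eq_of_eqOn continuous_id' rfl hf (by simp [f]) fun x _ ↦ ?_).symm
    rcases le_or_gt x δ with hx | hx
    · simp [f, ramp_of_le hδ hx]
    · have hx0 : x ≠ 0 := (hδ.trans hx).ne'
      simp [f, max_eq_right hx.le, mul_div_cancel₀ _ hx0]

lemma norm_cutoff_mul_sub_le (ha : 0 ≤ a) (hδ : 0 < δ) : ‖cutoff a δ * a - a‖ ≤ 2 * δ := by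
  have hcfc : cutoff a δ * a - a = cfcₙ (fun x ↦ ramp δ x * x - x) a := by
    rw [cfcₙ_sub (fun x ↦ ramp δ x * x) (fun x ↦ x) a, cfcₙ_mul (ramp δ) (fun x ↦ x) a,
      cfcₙ_id' ℝ a, cutoff]
  rw [hcfc]
  exact norm_cfcₙ_le fun x hx ↦ norm_ramp_mul_sub_le hδ (quasispectrum_nonneg_of_nonneg a ha x hx)

lemma tendsto_cutoff_mul_self (ha : 0 ≤ a) :
    Tendsto (fun δ ↦ cutoff a δ * a) (𝓝[>] 0) (𝓝 a) := by
  rw [tendsto_iff_norm_sub_tendsto_zero]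
  have h2 : Tendsto (fun δ : ℝ ↦ 2 * δ) (𝓝[>] 0) (𝓝 0) :=
    (Continuous.tendsto' (by fun_prop) _ _ (mul_zero 2)).mono_left nhdsWithin_le_nhds
  exact squeeze_zero' (.of_forall fun _ ↦ norm_nonneg _)
    (eventually_mem_nhdsWithin.mono fun _ hδ ↦ norm_cutoff_mul_sub_le ha hδ) h2

lemma mem_closure_conj_of_nonneg (ha : 0 ≤ a) :
    a ∈ closure ((fun k ↦ a * k * a) '' {k | 0 ≤ k ∧ Commute a k}) := by
  refine mem_closure_of_tendsto (tendsto_cutoff_mul_self ha)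
    (eventually_mem_nhdsWithin.mono fun δ hδ ↦ ?_)
  obtain ⟨k, hk, hak, h⟩ := exists_cutoff_eq_mul (.of_nonneg ha) hδ
  exact ⟨k, ⟨hk, hak⟩, by rw [h]⟩

end Cutoff

section CuntzSubequiv

section General

variable {R : Type*} [NonUnitalRing R] [StarRing R] [TopologicalSpace R]

lemma cuntzSubequiv_iff_mem_closure [FrechetUrysohnSpace R] {a b : R} :
    CuntzSubequiv a b ↔ a ∈ closure (Set.range fun x ↦ x * b * star x) := by
  rw [mem_closure_iff_seq_limit]
  constructor
  · rintro ⟨x, hx⟩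
    exact ⟨_, fun n ↦ Set.mem_range_self (x n), hx⟩
  · rintro ⟨y, hy, hya⟩
    choose x hx using hy
    exact ⟨x, by simpa only [hx] using hya⟩

lemma cuntzSubequiv_conj (x b : R) : CuntzSubequiv (x * b * star x) b :=
  ⟨fun _ ↦ x, tendsto_const_nhds⟩

lemma CuntzSubequiv.trans [FrechetUrysohnSpace R] [ContinuousMul R] {a b c : R}
    (hab : CuntzSubequiv a b) (hbc : CuntzSubequiv b c) : CuntzSubequiv a c := by
  rw [cuntzSubequiv_iff_mem_closure] at *
  refine closure_minimal ?_ isClosed_closure hab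
  rintro _ ⟨x, rfl⟩
  refine map_mem_closure (f := fun y ↦ x * y * star x) (by fun_prop) hbc ?_
  rintro _ ⟨y, rfl⟩
  exact ⟨x * y, by simp only [star_mul, mul_assoc]⟩

lemma CuntzSubequiv.diagonal {n : Type*} [Fintype n] [DecidableEq n] {a b : n → R}
    (h : ∀ i, CuntzSubequiv (a i) (b i)) :
    CuntzSubequiv (Matrix.diagonal a) (Matrix.diagonal b) := by
  choose x hx using h
  refine ⟨fun k ↦ Matrix.diagonal fun i ↦ x i k, ?_⟩
  have hlim : Tendsto (fun k i ↦ x i k * b i * star (x i k)) atTop (𝓝 a) := tendsto_pi_nhds.2 hx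
  have hdiag := (continuous_id.matrix_diagonal (n := n) (R := R)).tendsto a |>.comp hlim
  simpa [Function.comp_def, Matrix.star_eq_conjTranspose, Matrix.diagonal_conjTranspose,
    Pi.star_def] using hdiag

end General

variable {B : Type*} [NonUnitalCStarAlgebra B] [PartialOrder B]

lemma cuntzSubequiv_mul_self [StarOrderedRing B] {a : B} (ha : 0 ≤ a) :
    CuntzSubequiv a (a * a) := by
  set s := CFC.sqrt a
  have hs0 : 0 ≤ s := CFC.sqrt_nonneg a
  have hss : s * s = a := CFC.sqrt_mul_sqrt_self a
  have hs : star s = s := (IsSelfAdjoint.of_nonneg hs0).star_eq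
  rw [cuntzSubequiv_iff_mem_closure]
  suffices h : s * star s ∈ closure (Set.range fun x ↦ x * (a * a) * star x) by
    rwa [hs, hss] at h
  refine map_mem_closure (f := fun x ↦ x * star x) (by fun_prop) (mem_closure_conj_of_nonneg hs0) ?_
  rintro _ ⟨k, ⟨-, hsk⟩, rfl⟩
  refine ⟨k, ?_⟩
  have hk : s * k * s = k * a := by rw [hsk.eq, mul_assoc, hss]
  simp only [hk, star_mul, (IsSelfAdjoint.of_nonneg ha).star_eq, mul_assoc]

end CuntzSubequiv

section ProperlyInfinite

variable {B : Type*} [NonUnitalCStarAlgebra B] {b c : B}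

lemma IsFullIn.of_mul_eq {p : B} (hf : IsFullIn b) (hbp : b * p = b) : IsFullIn p :=
  fun J hJ hpJ ↦ hf J hJ (hbp ▸ J.mul_mem_left _ _ hpJ)

variable [PartialOrder B]

lemma ProperlyInfinite.of_cuntzSubequiv (hb : ProperlyInfinite b) (hc0 : c ≠ 0) (hc : 0 ≤ c)
    (hcb : CuntzSubequiv c b) (hbc : CuntzSubequiv b c) : ProperlyInfinite c := by
  have : FrechetUrysohnSpace (Matrix (Fin 2) (Fin 2) B) :=
    inferInstanceAs (FrechetUrysohnSpace (Fin 2 → Fin 2 → B))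
  have hzero : CuntzSubequiv (0 : B) 0 := by simpa using cuntzSubequiv_conj (0 : B) 0
  have hccbb : CuntzSubequiv (Matrix.diagonal ![c, c]) (Matrix.diagonal ![b, b]) :=
    .diagonal (Fin.forall_fin_two.2 ⟨hcb, hcb⟩)
  have hb0c0 : CuntzSubequiv (Matrix.diagonal ![b, 0]) (Matrix.diagonal ![c, 0]) :=
    .diagonal (Fin.forall_fin_two.2 ⟨hbc, hzero⟩)
  exact ⟨hc0, hc, (hccbb.trans hb.2.2).trans hb0c0⟩

lemma ProperlyInfinite.exists_tendsto (hb : ProperlyInfinite b) :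
    ∃ y : ℕ → Fin 2 → B, ∀ i j, Tendsto (fun n ↦ y n i * b * star (y n j)) atTop
      (𝓝 (Matrix.diagonal ![b, b] i j)) := by
  obtain ⟨-, -, x, hx⟩ := hb
  refine ⟨fun n i ↦ x n i 0, fun i j ↦ ?_⟩
  refine (tendsto_pi_nhds.1 (tendsto_pi_nhds.1 hx i) j).congr fun n ↦ ?_
  simp [Matrix.mul_apply, Fin.sum_univ_two, Matrix.star_apply, Matrix.diagonal]

lemma ProperlyInfinite.add_mem_closure (hb : ProperlyInfinite b) (u w u' w' : B) :
    u * b * w + u' * b * w' ∈ closure (Set.range fun q : B × B ↦ q.1 * b * q.2) := by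
  obtain ⟨y, hy⟩ := hb.exists_tendsto
  have hlim : Tendsto (fun n ↦ ∑ i, ∑ j, ![u, u'] i * (y n i * b * star (y n j)) * ![w, w'] j)
      atTop (𝓝 (∑ i, ∑ j, ![u, u'] i * Matrix.diagonal ![b, b] i j * ![w, w'] j)) :=
    tendsto_finsetSum _ fun i _ ↦ tendsto_finsetSum _ fun j _ ↦
      ((hy i j).const_mul _).mul_const _
  have hsum : ∑ i, ∑ j, ![u, u'] i * Matrix.diagonal ![b, b] i j * ![w, w'] j =
      u * b * w + u' * b * w' := by
    simp [Fin.sum_univ_two]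
  rw [← hsum]
  refine mem_closure_of_tendsto hlim (.of_forall fun n ↦
    ⟨(∑ i, ![u, u'] i * y n i, ∑ j, star (y n j) * ![w, w'] j), ?_⟩)
  simp only [Finset.sum_mul, Finset.mul_sum, mul_assoc]
  exact Finset.sum_comm

lemma IsFullIn.mem_closure_mul_mul (hf : IsFullIn b) (hb : ProperlyInfinite b) (x : B) :
    x ∈ closure (Set.range fun q : B × B ↦ q.1 * b * q.2) := by
  set S : Set B := Set.range fun q : B × B ↦ q.1 * b * q.2
  have hadd {x y : B} (hx : x ∈ closure S) (hy : y ∈ closure S) : x + y ∈ closure S := by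
    rw [← closure_closure]
    refine map_mem_closure₂ continuous_add hx hy ?_
    rintro _ ⟨⟨u, w⟩, rfl⟩ _ ⟨⟨u', w'⟩, rfl⟩
    exact hb.add_mem_closure u w u' w'
  let J : TwoSidedIdeal B := TwoSidedIdeal.mk' (closure S) (subset_closure ⟨0, by simp⟩) hadd
    (fun hx ↦ map_mem_closure continuous_neg hx (by
      rintro _ ⟨⟨u, w⟩, rfl⟩
      exact ⟨(-u, w), by simp⟩))
    (fun {v _} hx ↦ map_mem_closure (continuous_const_mul v) hx (by
      rintro _ ⟨⟨u, w⟩, rfl⟩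
      exact ⟨(v * u, w), by simp only [mul_assoc]⟩))
    (fun {_ v} hx ↦ map_mem_closure (f := (· * v)) (continuous_mul_const v) hx (by
      rintro _ ⟨⟨u, w⟩, rfl⟩
      exact ⟨(u, w * v), by simp only [mul_assoc]⟩))
  have hJ (y : B) : y ∈ J ↔ y ∈ closure S := TwoSidedIdeal.mem_mk' ..
  have hbS : b ∈ closure S := by
    obtain ⟨y, hy⟩ := hb.exists_tendsto
    exact mem_closure_of_tendsto (by simpa using hy 0 0) (.of_forall fun n ↦ ⟨(_, _), rfl⟩)
  exact (hJ x).1 (hf J ((Set.ext hJ : (J : Set B) = closure S) ▸ isClosed_closure) ((hJ b).2 hbS) x)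

variable [StarOrderedRing B]

lemma IsFullIn.cuntzSubequiv (hf : IsFullIn b) (hb : ProperlyInfinite b) (hc : 0 ≤ c) :
    CuntzSubequiv c b := by
  obtain ⟨s, rfl⟩ := CStarAlgebra.nonneg_iff_eq_star_mul_self.1 hc
  rw [cuntzSubequiv_iff_mem_closure, ← closure_closure]
  refine map_mem_closure (f := fun x ↦ star x * x) (by fun_prop) (hf.mem_closure_mul_mul hb s) ?_
  rintro _ ⟨⟨u, w⟩, rfl⟩
  rw [← cuntzSubequiv_iff_mem_closure]
  beta_reduce
  set r := CFC.sqrt b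
  have hr : star r = r := (IsSelfAdjoint.of_nonneg (CFC.sqrt_nonneg b)).star_eq
  have hrr : r * r = b := CFC.sqrt_mul_sqrt_self b hb.2.1
  set m := star (u * r) * (u * r)
  have hconj : star (u * b * w) * (u * b * w) = star w * r * m * star (star w * r) := by
    simp only [m, ← hrr, star_mul, star_star, hr, mul_assoc]
  have hmm : m * m = star (u * r) * u * b * star (star (u * r) * u) := by
    simp only [m, ← hrr, star_mul, star_star, hr, mul_assoc]
  rw [hconj]
  refine (cuntzSubequiv_conj _ m).trans ((cuntzSubequiv_mul_self (star_mul_self_nonneg _)).trans ?_)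
  rw [hmm]
  exact cuntzSubequiv_conj _ b

lemma ProperlyInfinite.of_mul_eq {p : B} (hb : ProperlyInfinite b) (hf : IsFullIn b)
    (hp : 0 ≤ p) (hbp : b * p = b) : ProperlyInfinite p := by
  have hp0 : p ≠ 0 := fun h ↦ hb.1 (by rw [← hbp, h, mul_zero])
  have hbb : b * b = b * p * star b := by rw [hbp, (IsSelfAdjoint.of_nonneg hb.2.1).star_eq]
  refine hb.of_cuntzSubequiv hp0 hp (hf.cuntzSubequiv hb hp)
    ((cuntzSubequiv_mul_self hb.2.1).trans ?_)
  rw [hbb]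
  exact cuntzSubequiv_conj b p

lemma IsFullIn.mem_closure_star_mul_self (hf : IsFullIn b) (hb : ProperlyInfinite b) (hc : 0 ≤ c) :
    c ∈ closure (Set.range fun y ↦ star (b * y * c) * (b * y * c)) := by
  rw [← closure_closure]
  refine closure_mono ?_ (mem_closure_conj_of_nonneg hc)
  rintro _ ⟨k, ⟨hk, -⟩, rfl⟩
  have hkbb : CuntzSubequiv k (b * b) :=
    (hf.cuntzSubequiv hb hk).trans (cuntzSubequiv_mul_self hb.2.1)
  refine map_mem_closure (f := fun x ↦ c * x * c) (by fun_prop)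
    (cuntzSubequiv_iff_mem_closure.1 hkbb) ?_
  rintro _ ⟨y, rfl⟩
  refine ⟨star y, ?_⟩
  simp only [star_mul, star_star, (IsSelfAdjoint.of_nonneg hc).star_eq,
    (IsSelfAdjoint.of_nonneg hb.2.1).star_eq, mul_assoc]

end ProperlyInfinite

section Projection

lemma isStarProjection_one_sub_mul_inv_mul_star {R : Type*} [Ring R] [StarRing R] {v : R} {c : Rˣ}
    (hc : star v * v = c) : IsStarProjection (1 - v * ↑c⁻¹ * star v) := by
  have hstar : star (↑c⁻¹ : R) = ↑c⁻¹ := by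
    have : star c = c := Units.ext (by rw [Units.coe_star, ← hc, star_mul, star_star])
    rw [← Units.coe_star_inv, this]
  refine IsStarProjection.one_sub ⟨?_, ?_⟩
  · calc v * ↑c⁻¹ * star v * (v * ↑c⁻¹ * star v)
        = v * ↑c⁻¹ * (star v * v) * ↑c⁻¹ * star v := by simp only [mul_assoc]
      _ = v * ↑c⁻¹ * star v := by rw [hc, Units.inv_mul_cancel_right]
  · simp only [isSelfAdjoint_iff, star_mul, star_star, hstar, mul_assoc]

variable {B : Type*} [NonUnitalCStarAlgebra B]

open Unitization in
lemma exists_isStarProjection_of_norm_lt_one {n : B} (hn : ‖n + star n + star n * n‖ < 1) :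
    ∃ p : B, IsStarProjection p ∧ (∀ e, e * n = -e → e * p = e) ∧
      ∀ u, n * u = n → star n * u = star n → p * u = p := by
  set v : Unitization ℂ B := 1 + n with hv
  have hvs : star v = 1 + ↑(star n) := by rw [hv, star_add, star_one, inr_star]
  obtain ⟨c, hc⟩ : IsUnit (star v * v) := by
    have hvv : star v * v = 1 - -(↑(n + star n + star n * n) : Unitization ℂ B) := by
      rw [hvs, hv, inr_add, inr_add, inr_mul]
      noncomm_ring
    rw [hvv]
    exact isUnit_one_sub_of_norm_lt_one (by rwa [norm_neg, norm_inr])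
  set q := 1 - v * ↑c⁻¹ * star v with hq
  obtain ⟨p, hp⟩ : ∃ p : B, (p : Unitization ℂ B) = q := by
    have hfst : q.fst = 0 := by
      have hv1 : v.fst = 1 := by simp [hv]
      have hcinv : (↑c⁻¹ : Unitization ℂ B).fst = 1 := by
        simpa [hc, hv1] using congrArg (·.fst) c.mul_inv
      simp [hq, sub_eq_add_neg, hv1, hcinv]
    exact ⟨q.snd, Unitization.ext hfst.symm rfl⟩
  refine ⟨p, ?_, fun e he ↦ ?_, fun u hu hu' ↦ ?_⟩
  · rw [← isStarProjection_inr_iff (R := ℂ), hp]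
    exact isStarProjection_one_sub_mul_inv_mul_star hc.symm
  · have hev : (e : Unitization ℂ B) * v = 0 := by
      rw [hv, mul_add, mul_one, ← inr_mul, he, inr_neg, add_neg_cancel]
    apply inr_injective (R := ℂ)
    rw [inr_mul, hp, hq, mul_sub, mul_one, mul_assoc, ← mul_assoc _ v, hev, zero_mul, sub_zero]
  · have hvu : v * (1 - u) = 1 - u := by
      rw [hv, add_mul, one_mul, mul_sub, mul_one, ← inr_mul, hu, sub_self, add_zero]
    have hvu' : star v * (1 - u) = 1 - u := by
      rw [hvs, add_mul, one_mul, mul_sub, mul_one, ← inr_mul, hu', sub_self, add_zero]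
    have hcu : ↑c⁻¹ * (1 - u : Unitization ℂ B) = 1 - u := by
      rw [Units.inv_mul_eq_iff_eq_mul, hc, mul_assoc, hvu, hvu']
    have hqu : q * (1 - u) = 0 := by
      rw [hq, sub_mul, one_mul, mul_assoc, hvu', mul_assoc, hcu, hvu, sub_self]
    apply inr_injective (R := ℂ)
    rw [inr_mul, hp]
    exact (sub_eq_zero.1 (by rwa [mul_sub, mul_one] at hqu)).symm

variable [PartialOrder B] [StarOrderedRing B]

lemma IsFullIn.exists_isStarProjection {b e t u : B} (hf : IsFullIn b) (hb : ProperlyInfinite b)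
    (ht : IsSelfAdjoint t) (htt : t * t ≤ t + t) (hbt : b * t = b) (heb : e * b = 0)
    (het : e * t = e) (htu : t * u = t) :
    ∃ p : B, IsStarProjection p ∧ e * p = e ∧ p * u = p := by
  have htb : t * b = b := by
    simpa [ht.star_eq, (IsSelfAdjoint.of_nonneg hb.2.1).star_eq] using congrArg star hbt
  obtain ⟨_, ⟨y, rfl⟩, hy⟩ := Metric.mem_closure_iff.1
    (hf.mem_closure_star_mul_self hb (sub_nonneg.2 htt)) 1 one_pos
  set z := b * y * (t + t - t * t) with hz
  have hzu : z * u = z := by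
    rw [hz, mul_assoc, sub_mul, add_mul, mul_assoc t, htu]
  have htz : t * z = z := by rw [hz, ← mul_assoc, ← mul_assoc, htb]
  have hzt : star z * t = star z := by simpa [ht.star_eq] using congrArg star htz
  have hez : e * z = 0 := by rw [hz, ← mul_assoc, ← mul_assoc, heb, zero_mul, zero_mul]
  have hn : z - t + star (z - t) + star (z - t) * (z - t) = star z * z - (t + t - t * t) := by
    simp only [star_sub, ht.star_eq, mul_sub, sub_mul, hzt, htz]
    abel
  obtain ⟨p, hp, hpe, hpu⟩ := exists_isStarProjection_of_norm_lt_one (n := z - t)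
    (by rwa [hn, ← dist_eq_norm, dist_comm])
  refine ⟨p, hp, hpe e ?_, hpu u ?_ ?_⟩
  · rw [mul_sub, hez, het, zero_sub]
  · rw [sub_mul, hzu, htu]
  · rw [star_sub, ht.star_eq, sub_mul, htu, ← hzt, mul_assoc, htu]

end Projection

section ApproximateUnit

lemma tendsto_mul_of_mem_closure {R ι : Type*} [NonUnitalNormedRing R] {p : ι → R} {l : Filter ι}
    {s : Set R} {x : R} (hp : ∀ i, ‖p i‖ ≤ 1) (hs : ∀ y ∈ s, Tendsto (fun i ↦ p i * y) l (𝓝 y))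
    (hx : x ∈ closure s) : Tendsto (fun i ↦ p i * x) l (𝓝 x) := by
  have hlip (i : ι) : LipschitzWith 1 (p i * ·) := .of_dist_le_mul fun y z ↦ by
    rw [dist_eq_norm, dist_eq_norm, ← mul_sub, NNReal.coe_one]
    exact (norm_mul_le _ _).trans (mul_le_mul_of_nonneg_right (hp i) (norm_nonneg _))
  have hclosed : IsClosed {y | Tendsto (fun i ↦ p i * y) l (𝓝 y)} :=
    (LipschitzWith.uniformEquicontinuous _ 1 hlip).equicontinuous.isClosed_setOfPred_tendsto
      continuous_id
  exact closure_minimal hs hclosed hx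

lemma norm_mul_sub_le_of_isStarProjection {R : Type*} [NonUnitalNormedRing R] [StarRing R]
    [CStarRing R] {p e : R} (hp : IsStarProjection p) (hpe : p * e = e) (x : R) :
    ‖p * x - x‖ ≤ 2 * ‖e * x - x‖ := by
  calc ‖p * x - x‖ = ‖(e * x - x) - p * (e * x - x)‖ := by
        rw [mul_sub, ← mul_assoc, hpe]
        congr 1
        abel
    _ ≤ ‖e * x - x‖ + ‖p‖ * ‖e * x - x‖ :=
        (norm_sub_le _ _).trans (add_le_add_right (norm_mul_le _ _) _)
    _ ≤ ‖e * x - x‖ + 1 * ‖e * x - x‖ := by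
        gcongr
        exact hp.norm_le p
    _ = 2 * ‖e * x - x‖ := by ring

variable {B : Type*} [NonUnitalCStarAlgebra B] {a : B} {δ : ℝ}

lemma tendsto_mul_of_mem_herSub {ι : Type*} {l : Filter ι} {p : ι → B} {S : Set B} {x : B}
    (hp : ∀ i, ‖p i‖ ≤ 1) (ha : Tendsto (fun i ↦ p i * a) l (𝓝 a)) (hx : x ∈ herSub S a) :
    Tendsto (fun i ↦ p i * x) l (𝓝 x) := by
  refine tendsto_mul_of_mem_closure hp ?_ hx
  rintro _ ⟨b, -, rfl⟩
  simpa only [mul_assoc] using ha.mul_const (b * a)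

variable [PartialOrder B] [StarOrderedRing B]

lemma mem_herSub_of_mul_cutoff {p : B} (ha : IsSelfAdjoint a) (hδ : 0 < δ) (hp : IsSelfAdjoint p)
    (h : p * cutoff a δ = p) : p ∈ herSub Set.univ a := by
  obtain ⟨k, -, hak, hk⟩ := exists_cutoff_eq_mul ha hδ
  have h' : cutoff a δ * p = p := by
    simpa [hp.star_eq, isSelfAdjoint_cutoff.star_eq] using congrArg star h
  refine subset_closure ⟨k * p * k, trivial, ?_⟩
  calc p = cutoff a δ * p * cutoff a δ := by rw [h', h]
    _ = (a * k) * p * (k * a) := by rw [← hak.eq, ← hk]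
    _ = a * (k * p * k) * a := by simp only [mul_assoc]

lemma tendsto_mul_of_cutoff_mul {ι : Type*} {l : Filter ι} {d : ι → ℝ} {p : ι → B} (ha : 0 ≤ a)
    (hd : Tendsto d l (𝓝[>] 0)) (hp : ∀ i, IsStarProjection (p i))
    (h : ∀ i, cutoff a (d i) * p i = cutoff a (d i)) : Tendsto (fun i ↦ p i * a) l (𝓝 a) := by
  have hE := ((tendsto_cutoff_mul_self ha).comp hd).sub_const a |>.norm.const_mul 2
  rw [sub_self, norm_zero, mul_zero] at hE
  refine tendsto_iff_norm_sub_tendsto_zero.2 (squeeze_zero (fun _ ↦ norm_nonneg _) (fun i ↦ ?_) hE)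
  refine norm_mul_sub_le_of_isStarProjection (hp i) ?_ a
  simpa [(hp i).isSelfAdjoint.star_eq, isSelfAdjoint_cutoff.star_eq] using congrArg star (h i)

end ApproximateUnit

section Construction

variable {B : Type*} [NonUnitalCStarAlgebra B] [PartialOrder B] [StarOrderedRing B]
  {A : NonUnitalStarSubalgebra ℂ B} {a : B} {δ : ℝ}

lemma exists_isStarProjection_of_mem_quasispectrum (hA : IsClosed (A : Set B))
    (h : ∀ a ∈ A, 0 ≤ a → a ≠ 0 → IsFullIn a ∧ ProperlyInfinite a) (haA : a ∈ A)
    (ha : IsSelfAdjoint a) {l : ℝ} (hl : l ∈ quasispectrum ℝ a) (hl0 : 0 < l) (hlδ : l < δ) :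
    ∃ p, IsStarProjection p ∧ cutoff a δ * p = cutoff a δ ∧ p * cutoff a (l / 16) = p := by
  have hδ : 0 < δ := hl0.trans hlδ
  set f : ℝ → ℝ := fun x ↦ max 0 ((x - l / 4) * (δ - x))
  have hf : Continuous f := by fun_prop
  have hf0 : f 0 = 0 := max_eq_left (by nlinarith)
  have hfl : f l ≠ 0 := (lt_max_of_lt_right (mul_pos (by linarith) (by linarith))).ne'
  obtain ⟨hfull, hinf⟩ := h (cfcₙ f a) (cfcₙ_mem (hs := hA) f haA)
    (cfcₙ_nonneg fun _ _ ↦ le_max_left _ _) (cfcₙ_ne_zero ha hf hf0 hl hfl)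
  have hft : cfcₙ f a * cutoff a (l / 8) = cfcₙ f a :=
    cfcₙ_mul_cutoff (by positivity) hf hf0 fun x _ hx ↦
      max_eq_left (mul_nonpos_of_nonpos_of_nonneg (by linarith) (by linarith))
  have hef : cutoff a δ * cfcₙ f a = 0 := by
    rw [← cfcₙ_zero ℝ a]
    refine cfcₙ_mul_cfcₙ_eq_of_eqOn (continuous_ramp δ) (ramp_zero_right δ) hf hf0 fun x _ ↦ ?_
    rcases le_total x δ with hx | hx
    · simp [ramp_of_le hδ hx]
    · have hfx : f x = 0 :=
        max_eq_left (mul_nonpos_of_nonneg_of_nonpos (by linarith) (by linarith))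
      simp [hfx]
  have htt : cutoff a (l / 8) * cutoff a (l / 8) ≤ cutoff a (l / 8) + cutoff a (l / 8) :=
    cutoff_mul_self_le.trans (le_add_of_nonneg_left cutoff_nonneg)
  exact hfull.exists_isStarProjection hinf isSelfAdjoint_cutoff htt hft hef
    (cutoff_mul_cutoff (by positivity) (by linarith))
    (cutoff_mul_cutoff (by positivity) (by linarith))

lemma exists_isStarProjection_between_cutoffs (hA : IsClosed (A : Set B))
    (h : ∀ a ∈ A, 0 ≤ a → a ≠ 0 → IsFullIn a ∧ ProperlyInfinite a) (haA : a ∈ A)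
    (ha : IsSelfAdjoint a) (hδ : 0 < δ) :
    ∃ δ' ∈ Set.Ioc 0 (δ / 2), ∃ p,
      IsStarProjection p ∧ cutoff a δ * p = cutoff a δ ∧ p * cutoff a δ' = p := by
  by_cases hgap : ∃ l ∈ quasispectrum ℝ a, 0 < l ∧ l < δ
  · obtain ⟨l, hl, hl0, hlδ⟩ := hgap
    exact ⟨l / 16, ⟨by positivity, by linarith⟩,
      exists_isStarProjection_of_mem_quasispectrum hA h haA ha hl hl0 hlδ⟩
  · push Not at hgap
    refine ⟨δ / 4, ⟨by positivity, by linarith⟩, cutoff a (δ / 2), ?_,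
      cutoff_mul_cutoff (by positivity) (by linarith),
      cutoff_mul_cutoff (by positivity) (by linarith)⟩
    refine isStarProjection_cutoff (by positivity) fun x hx hxδ ↦ ?_
    by_contra! hlt
    linarith [hgap x hx ((half_pos hδ).trans hlt)]

lemma exists_seq_isStarProjection_between_cutoffs (hA : IsClosed (A : Set B))
    (h : ∀ a ∈ A, 0 ≤ a → a ≠ 0 → IsFullIn a ∧ ProperlyInfinite a) (haA : a ∈ A)
    (ha : IsSelfAdjoint a) (hδ : 0 < δ) :
    ∃ (d : ℕ → ℝ) (p : ℕ → B), Tendsto d atTop (𝓝[>] 0) ∧ ∀ n, d n ∈ Set.Ioc 0 δ ∧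
      IsStarProjection (p n) ∧ cutoff a (d n) * p n = cutoff a (d n) ∧
      p n * cutoff a (d (n + 1)) = p n := by
  choose! next hnext p hp using fun ε (hε : 0 < ε) ↦
    exists_isStarProjection_between_cutoffs hA h haA ha hε
  set d : ℕ → ℝ := fun n ↦ next^[n] δ
  have hd_succ (n : ℕ) : d (n + 1) = next (d n) := Function.iterate_succ_apply' next n δ
  have hpos (n : ℕ) : 0 < d n := by
    induction n with
    | zero => exact hδ
    | succ n ih => exact hd_succ n ▸ (hnext (d n) ih).1
  have hhalf (n : ℕ) : d (n + 1) ≤ d n / 2 := hd_succ n ▸ (hnext (d n) (hpos n)).2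
  have hanti : Antitone d := antitone_nat_of_succ_le fun n ↦ by linarith [hhalf n, hpos n]
  have hgeom (n : ℕ) : d n ≤ (1 / 2) ^ n * d 0 :=
    le_geom one_half_pos.le n fun k _ ↦ (hhalf k).trans_eq (by ring)
  have hpow : Tendsto (fun n ↦ (1 / 2) ^ n * d 0) atTop (𝓝 0) := by
    simpa using (tendsto_pow_atTop_nhds_zero_of_lt_one one_half_pos.le
      one_half_lt_one).mul_const (d 0)
  refine ⟨d, fun n ↦ p (d n), tendsto_nhdsWithin_iff.2
    ⟨squeeze_zero (fun n ↦ (hpos n).le) hgeom hpow, .of_forall hpos⟩,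
    fun n ↦ ⟨⟨hpos n, hanti n.zero_le⟩, ?_⟩⟩
  rw [hd_succ]
  exact hp (d n) (hpos n)

lemma isFullIn_and_properlyInfinite_of_cutoff_mul (hA : IsClosed (A : Set B))
    (h : ∀ a ∈ A, 0 ≤ a → a ≠ 0 → IsFullIn a ∧ ProperlyInfinite a) (haA : a ∈ A)
    (ha : 0 ≤ a) (hδ : 0 < δ) (hδa : δ < ‖a‖) {p : B} (hp : 0 ≤ p)
    (hEp : cutoff a δ * p = cutoff a δ) : IsFullIn p ∧ ProperlyInfinite p := by
  obtain ⟨hfull, hinf⟩ :=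
    h (cutoff a δ) (cutoff_mem hA haA) cutoff_nonneg (cutoff_ne_zero ha hδ hδa)
  exact ⟨hfull.of_mul_eq hEp, hinf.of_mul_eq hfull hp hEp⟩

end Construction

theorem stmt18 {B : Type*} [NonUnitalCStarAlgebra B] [PartialOrder B] [StarOrderedRing B]
    (A : NonUnitalStarSubalgebra ℂ B) (hAc : IsClosed (A : Set B))
    (h : ∀ a ∈ A, 0 ≤ a → a ≠ 0 → IsFullIn a ∧ ProperlyInfinite a) :
    InclusionRealRankZero (A : Set B) (Set.univ : Set B) ∧
      ∀ a ∈ A, 0 ≤ a → a ≠ 0 →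
        ∃ p : ℕ → B,
          (∀ n, p n ∈ herSub (Set.univ : Set B) a) ∧
          (∀ n, IsProjection (p n)) ∧
          (∀ n, p n * p (n + 1) = p n) ∧
          (∀ n, IsFullIn (p n) ∧ ProperlyInfinite (p n)) ∧
          (∀ x ∈ herSub (Set.univ : Set B) a,
            Tendsto (fun n => ‖p n * x - x‖) atTop (nhds 0)) := by
  refine (and_iff_right_of_imp fun happrox a haA ha ha0 x hx _ ε hε ↦ ?_).2 fun a haA ha ha0 ↦ ?_
  · obtain ⟨p, hmem, hproj, -, -, hlim⟩ := happrox a haA ha ha0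
    obtain ⟨n, hn⟩ := ((hlim x hx).eventually_lt_const hε).exists
    exact ⟨p n, hmem n, hproj n, hn⟩
  · have hsa : IsSelfAdjoint a := .of_nonneg ha
    have hnorm : 0 < ‖a‖ := norm_pos_iff.2 ha0
    obtain ⟨d, p, hd, hdp⟩ :=
      exists_seq_isStarProjection_between_cutoffs hAc h haA hsa (half_pos hnorm)
    choose hdI hp hEp hpE using hdp
    have hda (n : ℕ) : d n < ‖a‖ := (hdI n).2.trans_lt (half_lt_self hnorm)
    have hmono (n : ℕ) : p n * p (n + 1) = p n := by rw [← hpE, mul_assoc, hEp]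
    have hlim : Tendsto (fun n ↦ p n * a) atTop (𝓝 a) := tendsto_mul_of_cutoff_mul ha hd hp hEp
    exact ⟨p, fun n ↦ mem_herSub_of_mul_cutoff hsa (hdI _).1 (hp n).isSelfAdjoint (hpE n),
      fun n ↦ ⟨(hp n).isSelfAdjoint, (hp n).isIdempotentElem⟩, hmono,
      fun n ↦ isFullIn_and_properlyInfinite_of_cutoff_mul hAc h haA ha (hdI n).1 (hda n)
        (hp n).nonneg (hEp n),
      fun x hx ↦ tendsto_iff_norm_sub_tendsto_zero.1
        (tendsto_mul_of_mem_herSub (fun n ↦ (hp n).norm_le) hlim hx)⟩
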